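/- The function h : [0, ∞) → ℝ defined by h(Δ) = √(2/π)·exp(−Δ²/8) − Δ·Φ(−Δ/2) is monotone nonincreasing on [0, ∞) and tends to 0 as Δ → ∞. Here Φ is the standard normal cumulative distribution function. -/

import Mathlib

/-!
The function `h` is, up to scaling, a stop-loss transform: integrating `x φ(x) = -φ'(x)` over
`(t, ∞)` gives `E[(Z - t)⁺] = φ(t) - t Φ(-t)` for `Z ~ N(0,1)`, hence `h(Δ) = 2 E[(Z - Δ/2)⁺]`.
The integrand `(Z - t)⁺` is antitone in `t`, vanishes as soon as `t ≥ Z`, and is dominated by `|Z|`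
for `t ≥ 0`, so monotonicity and the limit pass to the expectation.
-/

open MeasureTheory ProbabilityTheory Filter

/-- The standard normal cumulative distribution function `Φ(t) = P(Z ≤ t)`
for `Z ~ N(0,1)`. -/
noncomputable def stdNormalCDF (t : ℝ) : ℝ :=
  (gaussianReal 0 1 (Set.Iic t)).toReal

/-- `h(Δ) = √(2/π)·exp(−Δ²/8) − Δ·Φ(−Δ/2)`, the gap `D(Δ) − Δ/2` between the
expected distance to the LDA decision boundary and its linear approximation. -/
noncomputable def h (Δ : ℝ) : ℝ :=
  Real.sqrt (2 / Real.pi) * Real.exp (-Δ ^ 2 / 8) - Δ * stdNormalCDF (-(Δ / 2))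

open Set
open scoped Topology NNReal

/-- The stop-loss transform `t ↦ E[(X - t)⁺]` of a real random variable `X` with law `μ`: the
expected excess of `X` over the level `t`. -/
noncomputable def stopLoss (μ : Measure ℝ) (t : ℝ) : ℝ :=
  ∫ x, max (x - t) 0 ∂μ

section StopLoss

variable {μ : Measure ℝ}

theorem antitone_stopLoss [IsFiniteMeasure μ] (hμ : Integrable id μ) : Antitone (stopLoss μ) := by
  have integrable_excess (t : ℝ) : Integrable (fun x => max (x - t) 0) μ :=
    (hμ.sub (integrable_const t)).pos_part
  intro s t hst
  exact integral_mono (integrable_excess t) (integrable_excess s) fun x => by dsimp only; gcongr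

theorem tendsto_stopLoss_atTop (hμ : Integrable id μ) : Tendsto (stopLoss μ) atTop (𝓝 0) := by
  rw [← integral_zero ℝ ℝ (μ := μ)]
  refine tendsto_integral_filter_of_dominated_convergence (fun x => |x|) ?_ ?_ hμ.abs ?_
  · exact .of_forall fun t => by fun_prop
  · filter_upwards [eventually_ge_atTop 0] with t ht
    refine ae_of_all μ fun x => ?_
    rw [Real.norm_of_nonneg (le_max_right _ _)]
    exact max_le ((sub_le_self x ht).trans (le_abs_self x)) (abs_nonneg x)
  · refine ae_of_all μ fun x => tendsto_const_nhds.congr' ?_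
    filter_upwards [eventually_ge_atTop x] with t hxt
    exact (max_eq_right (sub_nonpos.2 hxt)).symm

theorem stopLoss_eq_setIntegral_Ioi (t : ℝ) : stopLoss μ t = ∫ x in Ioi t, (x - t) ∂μ := by
  rw [stopLoss, ← integral_indicator measurableSet_Ioi]
  congr 1 with x
  rcases le_or_gt x t with hxt | htx
  · rw [indicator_of_notMem (notMem_Ioi.2 hxt), max_eq_right (sub_nonpos.2 hxt)]
  · rw [indicator_of_mem (mem_Ioi.2 htx), max_eq_left (sub_nonneg.2 htx.le)]

end StopLoss

section Gaussian

variable (m : ℝ) (v : ℝ≥0)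

theorem integrable_id_gaussianReal : Integrable id (gaussianReal m v) :=
  memLp_one_iff_integrable.1 (memLp_id_gaussianReal 1)

variable {v}

theorem hasDerivAt_gaussianPDFReal (x : ℝ) :
    HasDerivAt (gaussianPDFReal m v) (-((x - m) / v * gaussianPDFReal m v x)) x := by
  have h_exponent : HasDerivAt (fun y : ℝ => -(y - m) ^ 2 / (2 * v)) (-((x - m) / v)) x := by
    convert! (((hasDerivAt_id x).sub_const m).pow 2).neg.div_const (2 * (v : ℝ)) using 1
    simp only [id_eq]
    ring
  rw [gaussianPDFReal_def]
  convert! h_exponent.exp.const_mul (√(2 * Real.pi * v))⁻¹ using 1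
  ring

theorem integrable_gaussianReal_iff {E : Type*} [NormedAddCommGroup E] [NormedSpace ℝ E]
    {g : ℝ → E} (hv : v ≠ 0) :
    Integrable g (gaussianReal m v) ↔ Integrable fun x => gaussianPDFReal m v x • g x := by
  rw [gaussianReal_of_var_ne_zero m hv, integrable_withDensity_iff_integrable_smul'
    (measurable_gaussianPDF m v) (ae_of_all _ fun _ => gaussianPDF_lt_top)]
  simp_rw [toReal_gaussianPDF]

theorem setIntegral_gaussianReal_eq_setIntegral_smul {E : Type*} [NormedAddCommGroup E]
    [NormedSpace ℝ E] {g : ℝ → E} {s : Set ℝ} (hv : v ≠ 0) (hs : MeasurableSet s) :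
    ∫ x in s, g x ∂gaussianReal m v = ∫ x in s, gaussianPDFReal m v x • g x := by
  rw [gaussianReal_of_var_ne_zero m hv, setIntegral_withDensity_eq_setIntegral_toReal_smul
    (measurable_gaussianPDF m v) (ae_of_all _ fun _ => gaussianPDF_lt_top) g hs]
  simp_rw [toReal_gaussianPDF]

theorem integrable_sub_mean_gaussianReal : Integrable (fun x => x - m) (gaussianReal m v) :=
  (integrable_id_gaussianReal m v).sub (integrable_const m)

theorem setIntegral_Ioi_sub_mean_gaussianReal (t : ℝ) :
    ∫ x in Ioi t, (x - m) ∂gaussianReal m v = v * gaussianPDFReal m v t := by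
  rcases eq_or_ne v 0 with rfl | hv
  · have h_dirac : (fun x => x - m) =ᵐ[(Measure.dirac m).restrict (Ioi t)] 0 :=
      ae_restrict_of_ae (by simp [ae_dirac_eq])
    rw [gaussianReal_zero_var, integral_eq_zero_of_ae h_dirac, NNReal.coe_zero, zero_mul]
  have h_antideriv (x : ℝ) : HasDerivAt (fun y => -(v * gaussianPDFReal m v y))
      (gaussianPDFReal m v x • (x - m)) x := by
    convert! ((hasDerivAt_gaussianPDFReal m x).const_mul (v : ℝ)).fun_neg using 1
    rw [smul_eq_mul]
    field_simp
  have h_deriv_integrable : Integrable fun x => gaussianPDFReal m v x • (x - m) :=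
    (integrable_gaussianReal_iff m hv).1 (integrable_sub_mean_gaussianReal m)
  have h_tendsto : Tendsto (fun x => -(v * gaussianPDFReal m v x)) atTop (𝓝 0) :=
    tendsto_zero_of_hasDerivAt_of_integrableOn_Ioi (a := t) (fun x _ => h_antideriv x)
      h_deriv_integrable.integrableOn
      ((integrable_gaussianPDFReal m v).const_mul (v : ℝ)).neg.integrableOn
  rw [setIntegral_gaussianReal_eq_setIntegral_smul m hv measurableSet_Ioi,
    integral_Ioi_of_hasDerivAt_of_tendsto' (fun x _ => h_antideriv x)
      h_deriv_integrable.integrableOn h_tendsto, zero_sub, neg_neg]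

theorem stopLoss_gaussianReal (t : ℝ) :
    stopLoss (gaussianReal m v) t =
      v * gaussianPDFReal m v t + (m - t) * (gaussianReal m v).real (Ioi t) := by
  have h_split (x : ℝ) : x - t = (x - m) + (m - t) := by ring
  rw [stopLoss_eq_setIntegral_Ioi, funext h_split,
    integral_add (integrable_sub_mean_gaussianReal m).integrableOn (integrable_const _),
    setIntegral_Ioi_sub_mean_gaussianReal, setIntegral_const, smul_eq_mul, mul_comm (m - t)]

end Gaussian

theorem stdNormalCDF_neg (t : ℝ) : stdNormalCDF (-t) = (gaussianReal 0 1).real (Ioi t) := by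
  have := nullSingletonClass_gaussianReal (μ := 0) (one_ne_zero' ℝ≥0)
  have h_symm : (gaussianReal 0 1).map (fun x => -x) = gaussianReal 0 1 := by
    rw [gaussianReal_map_neg, neg_zero]
  rw [measureReal_congr Ioi_ae_eq_Ici, stdNormalCDF, ← measureReal_def, ← h_symm,
    map_measureReal_apply measurable_neg measurableSet_Iic, h_symm]
  congr 1 with x
  exact neg_le_neg_iff (α := ℝ)

theorem two_mul_gaussianPDFReal_half (Δ : ℝ) :
    2 * gaussianPDFReal 0 1 (Δ / 2) = √(2 / Real.pi) * Real.exp (-Δ ^ 2 / 8) := by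
  have h_const : √(2 / Real.pi) = 2 * (√(2 * Real.pi))⁻¹ := by
    rw [← Real.sqrt_inv, Real.sqrt_eq_iff_mul_self_eq (by positivity) (by positivity),
      mul_mul_mul_comm, Real.mul_self_sqrt (by positivity)]
    field_simp
  have h_exponent : -(Δ / 2 - 0) ^ 2 / (2 * (1 : ℝ)) = -Δ ^ 2 / 8 := by ring
  rw [gaussianPDFReal, NNReal.coe_one, mul_one (2 * Real.pi), h_exponent, h_const, mul_assoc]

theorem h_eq_two_mul_stopLoss (Δ : ℝ) : h Δ = 2 * stopLoss (gaussianReal 0 1) (Δ / 2) := by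
  rw [stopLoss_gaussianReal, h, stdNormalCDF_neg, ← two_mul_gaussianPDFReal_half, NNReal.coe_one]
  ring

theorem h_antitoneOn_and_tendsto_zero_general : Antitone h ∧ Tendsto h atTop (𝓝 0) := by
  have h_integrable := integrable_id_gaussianReal 0 1
  have h_half : Monotone fun Δ : ℝ => Δ / 2 := fun _ _ hst => by dsimp only; gcongr
  have h_half_atTop : Tendsto (fun Δ : ℝ => Δ / 2) atTop atTop :=
    tendsto_id.atTop_div_const two_pos
  rw [funext h_eq_two_mul_stopLoss]
  constructor
  · exact ((antitone_stopLoss h_integrable).comp_monotone h_half).const_mul zero_le_two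
  · simpa using ((tendsto_stopLoss_atTop h_integrable).comp h_half_atTop).const_mul 2

/-- `h` is monotone nonincreasing on `[0, ∞)` and tends to `0` as `Δ → ∞`. -/
theorem h_antitoneOn_and_tendsto_zero :
    AntitoneOn h (Set.Ici 0) ∧ Tendsto h atTop (nhds 0) :=
  h_antitoneOn_and_tendsto_zero_general.imp_left fun h_anti => h_anti.antitoneOn _
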